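/- arXiv:math/0401252 — 2 statements merged into one kernel-verified Lean document; each statement's English description precedes it below -/
import Mathlib

section
/- For each k ≥ 1 and |q| < 1: Σ_{λ: l(λ) ≤ k} q^{|λ| + n_2(λ) - 2λ_1} (1 - q^{2λ_1}) / ((-q;q)_{λ_k} (q;q)_λ) = (q^{2k+2}, q^{2k-1}, q^3; q^{2k+2})_∞ / (q;q)_∞. -/
/-- Finite q-Pochhammer symbol `(x;q)_n = ∏_{k=0}^{n-1} (1 - x q^k)`. -/
noncomputable def qPoch (x q : ℂ) (n : ℕ) : ℂ := ∏ k ∈ Finset.range n, (1 - x * q ^ k)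

/-- Infinite q-Pochhammer symbol `(x;q)_∞ = ∏_{k≥0} (1 - x q^k)`. -/
noncomputable def qPochInf (x q : ℂ) : ℂ := ∏' k : ℕ, (1 - x * q ^ k)

/-- Partitions with at most `k` (positive) parts: antitone sequences of naturals vanishing
from index `k` on; `l 0` is the largest part `λ_1`, and `l (k-1)` is `λ_k`. -/
def PartK (k : ℕ) : Type := {l : ℕ → ℕ // Antitone l ∧ ∀ i, k ≤ i → l i = 0}

/-- `|λ| = Σ_i λ_i`. -/
def wtK (k : ℕ) (l : PartK k) : ℕ := ∑ i ∈ Finset.range k, l.1 i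

/-- `n_2(λ) = Σ_i λ_i^2`. -/
def n2K (k : ℕ) (l : PartK k) : ℕ := ∑ i ∈ Finset.range k, (l.1 i) ^ 2

/-- `n(λ) = Σ_i binom(λ_i, 2)`. -/
def nK (k : ℕ) (l : PartK k) : ℕ := ∑ i ∈ Finset.range k, Nat.choose (l.1 i) 2

/-- `(x;q)_λ = ∏_{i=1}^{k} (x;q)_{λ_i - λ_{i+1}}` (with `λ_{k+1} = 0`). -/
noncomputable def pochK (x q : ℂ) (k : ℕ) (l : PartK k) : ℂ :=
  ∏ i ∈ Finset.range k, qPoch x q (l.1 i - l.1 (i + 1))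

/-- Reciprocal of `(q;q)_m`. -/
noncomputable def rE (q : ℂ) (m : ℕ) : ℂ := (qPoch q q m)⁻¹

/-- `1/(q;q)_{n-r}`, zero when `r > n`. -/
noncomputable def rEE (q : ℂ) (n r : ℕ) : ℂ := if r ≤ n then rE q (n - r) else 0

lemma one_sub_pow_ne {q : ℂ} (hq : ‖q‖ < 1) (m : ℕ) : 1 - q ^ (m + 1) ≠ 0 := by
  intro h
  have h1 : q ^ (m + 1) = 1 := (sub_eq_zero.mp h).symm
  have h2 : ‖q‖ ^ (m + 1) = 1 := by rw [← norm_pow, h1, norm_one]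
  have h3 : ‖q‖ ^ (m + 1) < 1 := pow_lt_one₀ (norm_nonneg _) hq (by omega)
  linarith

lemma rE_zero (q : ℂ) : rE q 0 = 1 := by simp [rE, qPoch]

lemma rE_succ {q : ℂ} (hq : ‖q‖ < 1) (m : ℕ) : rE q m = (1 - q ^ (m + 1)) * rE q (m + 1) := by
  have h := one_sub_pow_ne hq m
  have h' : (1 - q * q ^ m) = 1 - q ^ (m + 1) := by ring
  simp only [rE, qPoch, Finset.prod_range_succ, h', mul_inv]
  field_simp

lemma rEE_of_le {q : ℂ} {n r : ℕ} (h : r ≤ n) : rEE q n r = rE q (n - r) := by simp [rEE, h]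

lemma rEE_of_lt {q : ℂ} {n r : ℕ} (h : n < r) : rEE q n r = 0 := by
  simp [rEE, not_le.mpr h]

lemma rEE_succ_succ (q : ℂ) (n r : ℕ) : rEE q (n + 1) (r + 1) = rEE q n r := by
  simp [rEE]

lemma rEE_succ_right {q : ℂ} (hq : ‖q‖ < 1) (n r : ℕ) :
    rEE q n (r + 1) = (1 - q ^ (n - r)) * rEE q n r := by
  rcases lt_trichotomy r n with h | h | h
  · rw [rEE_of_le h, rEE_of_le h.le]
    obtain ⟨d, rfl⟩ : ∃ d, n = r + 1 + d := ⟨n - (r + 1), by omega⟩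
    have h1 : r + 1 + d - (r + 1) = d := by omega
    have h2 : r + 1 + d - r = d + 1 := by omega
    rw [h1, h2]; exact rE_succ hq d
  · subst h; simp [rEE]
  · rw [rEE_of_lt h, rEE_of_lt (by omega)]; simp

lemma rEE_succ_left {q : ℂ} (hq : ‖q‖ < 1) (n r : ℕ) :
    rEE q n r = (1 - q ^ (n + 1 - r)) * rEE q (n + 1) r := by
  rw [← rEE_succ_succ q n r]; exact rEE_succ_right hq (n + 1) r

lemma chu {q : ℂ} (hq : ‖q‖ < 1) (N : ℕ) : ∀ c : ℕ,
    ∑ M ∈ Finset.range (N + 1), q ^ (M ^ 2 + c * M) * rEE q N M * rE q M * rE q (M + c)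
      = rE q N * rE q (N + c) := by
  induction N with
  | zero => intro c; simp [rEE, rE_zero]
  | succ N ih =>
    intro c
    have hne := one_sub_pow_ne hq N
    apply mul_left_cancel₀ hne
    have key : (1 - q ^ (N + 1)) * ∑ M ∈ Finset.range (N + 1 + 1),
        q ^ (M ^ 2 + c * M) * rEE q (N + 1) M * rE q M * rE q (M + c)
        = (∑ M ∈ Finset.range (N + 1), q ^ (M ^ 2 + c * M) * rEE q N M * rE q M * rE q (M + c))
        + q ^ (N + 1 + c) * ∑ M ∈ Finset.range (N + 1),
            q ^ (M ^ 2 + (c + 1) * M) * rEE q N M * rE q M * rE q (M + (c + 1)) := by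
      have h1 : ∀ M ∈ Finset.range (N + 1 + 1), (1 - q ^ (N + 1)) *
          (q ^ (M ^ 2 + c * M) * rEE q (N + 1) M * rE q M * rE q (M + c))
          = q ^ (M ^ 2 + c * M) * rEE q N M * rE q M * rE q (M + c)
          + q ^ (N + 1 - M) * (1 - q ^ M) *
            (q ^ (M ^ 2 + c * M) * rEE q (N + 1) M * rE q M * rE q (M + c)) := by
        intro M hM
        have hM' : M ≤ N + 1 := by simp at hM; omega
        rw [rEE_succ_left hq N M]
        have : q ^ (N + 1) = q ^ (N + 1 - M) * q ^ M := by rw [← pow_add]; congr 1; omega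
        rw [this]; ring
      rw [Finset.mul_sum, Finset.sum_congr rfl h1, Finset.sum_add_distrib]
      congr 1
      · rw [Finset.sum_range_succ, rEE_of_lt (Nat.lt_succ_self N)]; simp
      · rw [Finset.sum_range_succ', Finset.mul_sum]
        simp only [pow_zero, sub_self, mul_zero, zero_mul, add_zero]
        apply Finset.sum_congr rfl
        intro M hM
        have hM' : M ≤ N := by simp at hM; omega
        rw [rEE_succ_succ, rE_succ hq M]
        have e1 : M + 1 + c = M + (c + 1) := by ring
        rw [e1]
        have e2 : q ^ (N + 1 - (M + 1)) * q ^ ((M + 1) ^ 2 + c * (M + 1))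
            = q ^ (N + 1 + c) * q ^ (M ^ 2 + (c + 1) * M) := by
          rw [← pow_add, ← pow_add]; congr 1
          obtain ⟨d, rfl⟩ : ∃ d, N = M + d := ⟨N - M, by omega⟩
          have : M + d + 1 - (M + 1) = d := by omega
          rw [this]; ring
        linear_combination (1 - q ^ (M + 1)) * rEE q N M * rE q (M + 1) * rE q (M + (c + 1)) * e2
    rw [key, ih c, ih (c + 1), rE_succ hq N, rE_succ hq (N + c)]
    have e1 : N + 1 + c = N + c + 1 := by ring
    have e2 : N + (c + 1) = N + c + 1 := by ring
    rw [e1, e2]; ring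

/-- the unit Bailey-type base identity -/
lemma base_id {q : ℂ} (hq : ‖q‖ < 1) (n : ℕ) :
    (qPoch (-q) q n * qPoch q q n)⁻¹ = ∑ r ∈ Finset.range (n + 1),
      (-1) ^ r * q ^ (r ^ 2) * (1 - q ^ (2 * r + 1)) * rEE q n r * rE q (n + r + 1) := by
  induction n with
  | zero =>
    have := one_sub_pow_ne hq 0
    simp [rEE, rE_zero, qPoch, rE] at *
    field_simp
  | succ n ih =>
    have hne : (1 - q ^ (2 * (n + 1))) ≠ 0 := one_sub_pow_ne hq (2 * n + 1)
    have h0 : (qPoch (-q) q n * qPoch q q n)⁻¹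
        = (1 - q ^ (2 * (n + 1))) * (qPoch (-q) q (n + 1) * qPoch q q (n + 1))⁻¹ := by
      have : qPoch (-q) q (n + 1) * qPoch q q (n + 1)
          = (1 - q ^ (2 * (n + 1))) * (qPoch (-q) q n * qPoch q q n) := by
        simp only [qPoch, Finset.prod_range_succ]; ring
      rw [this, mul_inv (1 - q ^ (2 * (n + 1))), mul_inv_cancel_left₀ hne]
    apply mul_left_cancel₀ hne
    rw [← h0, ih]
    have ext : ∑ r ∈ Finset.range (n + 1),
        (-1) ^ r * q ^ (r ^ 2) * (1 - q ^ (2 * r + 1)) * rEE q n r * rE q (n + r + 1)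
        = ∑ r ∈ Finset.range (n + 1 + 1),
        (-1) ^ r * q ^ (r ^ 2) * (1 - q ^ (2 * r + 1)) * rEE q n r * rE q (n + r + 1) := by
      rw [Finset.sum_range_succ _ (n + 1), rEE_of_lt (Nat.lt_succ_self n)]; simp
    rw [ext, Finset.mul_sum, eq_comm, ← sub_eq_zero, ← Finset.sum_sub_distrib]
    have tel := Finset.sum_range_sub (fun r : ℕ => -(-1) ^ r * q ^ (r ^ 2) *
      (q ^ (n + 1 - r) - q ^ (n + 1 + r)) * rEE q (n + 1) r * rE q (n + 1 + r)) (n + 1 + 1)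
    rw [rEE_of_lt (show n + 1 < n + 1 + 1 by omega)] at tel
    simp only [mul_zero, zero_mul, Nat.sub_zero, add_zero, sub_self] at tel
    rw [← tel]
    apply Finset.sum_congr rfl
    intro r hr
    have hr' : r ≤ n + 1 := by simp at hr; omega
    obtain ⟨d, hd⟩ : ∃ d, n + 1 = r + d := ⟨n + 1 - r, by omega⟩
    rw [rEE_succ_left hq n r, rEE_succ_right hq (n + 1) r]
    have e1 : n + r + 1 = n + 1 + r := by ring
    have e2 : n + 1 + (r + 1) = n + 1 + r + 1 := by ring
    rw [e1, e2, rE_succ hq (n + 1 + r)]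
    rcases Nat.eq_zero_or_pos d with h | h
    · have : n + 1 = r := by omega
      subst this
      simp
      ring
    · obtain ⟨d, rfl⟩ : ∃ e, d = e + 1 := ⟨d - 1, by omega⟩
      rw [hd]
      have e3 : r + (d + 1) - r = d + 1 := by omega
      have e4 : r + (d + 1) - (r + 1) = d := by omega
      rw [e3, e4]
      ring
open Filter Topology in
lemma qPoch_tendsto {q : ℂ} (hq : ‖q‖ < 1) (x : ℂ) :
    Tendsto (fun n => qPoch x q n) atTop (𝓝 (qPochInf x q)) := by
  have h : Multipliable fun n : ℕ => 1 - x * q ^ n := by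
    simp only [sub_eq_add_neg]
    apply multipliable_one_add_of_summable
    simpa using (summable_geometric_of_lt_one (norm_nonneg _) hq).mul_left ‖x‖
  exact h.hasProd.tendsto_prod_nat

lemma qPochInf_ne {q : ℂ} (hq : ‖q‖ < 1) {x : ℂ} (hx : ‖x‖ < 1) : qPochInf x q ≠ 0 := by
  unfold qPochInf
  simp only [sub_eq_add_neg]
  apply tprod_one_add_ne_zero_of_summable
  · intro i h
    have h1 : x * q ^ i = 1 := by linear_combination -h
    have h2 : ‖x‖ * ‖q‖ ^ i = 1 := by rw [← norm_pow, ← norm_mul, h1, norm_one]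
    have h3 : ‖q‖ ^ i ≤ 1 := pow_le_one₀ (norm_nonneg _) hq.le
    nlinarith [norm_nonneg x]
  · simpa using (summable_geometric_of_lt_one (norm_nonneg _) hq).mul_left ‖x‖

lemma qPoch_inv_bdd {q : ℂ} (hq : ‖q‖ < 1) {x : ℂ} (hx : ‖x‖ < 1) :
    ∃ C : ℝ, 0 < C ∧ ∀ n, ‖(qPoch x q n)⁻¹‖ ≤ C := by
  have h := (qPoch_tendsto hq x).inv₀ (qPochInf_ne hq hx)
  obtain ⟨C, hC⟩ := (Metric.isBounded_range_of_tendsto _ h).exists_norm_le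
  refine ⟨max C 1, by positivity, fun n => (hC _ ⟨n, rfl⟩).trans (le_max_left _ _)⟩

open Filter Topology in
lemma rE_tendsto {q : ℂ} (hq : ‖q‖ < 1) :
    Tendsto (fun n => rE q n) atTop (𝓝 (qPochInf q q)⁻¹) :=
  (qPoch_tendsto hq q).inv₀ (qPochInf_ne hq hq)

open Filter Topology in
lemma rEE_tendsto {q : ℂ} (hq : ‖q‖ < 1) (r : ℕ) :
    Tendsto (fun n => rEE q n r) atTop (𝓝 (qPochInf q q)⁻¹) := by
  have h : Tendsto (fun n => rE q (n - r)) atTop (𝓝 (qPochInf q q)⁻¹) :=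
    (rE_tendsto hq).comp (tendsto_sub_atTop_nat r)
  refine h.congr' ?_
  filter_upwards [eventually_ge_atTop r] with n hn
  rw [rEE_of_le hn]

lemma rEE_bdd {q : ℂ} {C : ℝ} (hC0 : 0 < C) (hC : ∀ n, ‖rE q n‖ ≤ C) (n r : ℕ) :
    ‖rEE q n r‖ ≤ C := by
  unfold rEE; split_ifs
  · exact hC _
  · simpa using hC0.le

/-- dominated convergence against `rEE`. -/
lemma limit_lemma {q : ℂ} (hq : ‖q‖ < 1) (f : ℕ → ℂ) (hf : Summable fun n => ‖f n‖)
    (g : ℕ → ℕ → ℂ) (G : ℂ) (C' : ℝ) (hg : ∀ n r, ‖g n r‖ ≤ C')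
    (hgt : ∀ r, Filter.Tendsto (fun n => g n r) Filter.atTop (nhds G)) :
    Filter.Tendsto (fun N => ∑ r ∈ Finset.range (N + 1), f r * rEE q N r * g N r) Filter.atTop
      (nhds (∑' r, f r * (qPochInf q q)⁻¹ * G)) := by
  obtain ⟨C, hC0, hC⟩ := qPoch_inv_bdd hq hq
  have hE := rEE_bdd hC0 hC
  have h := tendsto_tsum_of_dominated_convergence (𝓕 := Filter.atTop)
    (f := fun N r => f r * rEE q N r * g N r)
    (g := fun r => f r * (qPochInf q q)⁻¹ * G) (bound := fun r => ‖f r‖ * C * C')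
    ((hf.mul_right C).mul_right C')
    (fun r => ((rEE_tendsto hq r).const_mul (f r)).mul (hgt r))
    (Filter.Eventually.of_forall fun N r => by
      rw [norm_mul, norm_mul]
      gcongr
      · exact hE N r
      · exact hg N r)
  refine h.congr fun N => ?_
  apply tsum_eq_sum
  intro r hr
  rw [rEE_of_lt (by simpa using hr)]; simp

lemma summable_pow_of_le {q : ℂ} (hq : ‖q‖ < 1) (e : ℕ → ℕ) (he : ∀ n, n ≤ e n + 1) :
    Summable fun n => ‖q ^ (e n)‖ := by
  rw [← summable_nat_add_iff 1]
  refine Summable.of_nonneg_of_le (fun _ => norm_nonneg _) (fun n => ?_)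
    (summable_geometric_of_lt_one (norm_nonneg _) hq)
  rw [norm_pow]
  exact pow_le_pow_of_le_one (norm_nonneg _) hq.le (by have := he (n + 1); omega)

lemma durfee_summable {q : ℂ} (hq : ‖q‖ < 1) (c : ℕ) :
    Summable fun M : ℕ => q ^ (M ^ 2 + c * M) * rE q M * rE q (M + c) := by
  obtain ⟨C, hC0, hC⟩ := qPoch_inv_bdd hq hq
  refine Summable.of_norm_bounded
    (((summable_pow_of_le hq (fun M => M ^ 2 + c * M) ?_).mul_right C).mul_right C) ?_
  · intro n; nlinarith [Nat.zero_le (c * n)]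
  · intro M
    rw [norm_mul, norm_mul]
    gcongr
    · exact hC _
    · exact hC _

/-- Durfee rectangle identity. -/
lemma durfee {q : ℂ} (hq : ‖q‖ < 1) (c : ℕ) :
    HasSum (fun M : ℕ => q ^ (M ^ 2 + c * M) * rE q M * rE q (M + c)) (qPochInf q q)⁻¹ := by
  have hs := durfee_summable hq c
  have h1 := limit_lemma hq (fun M : ℕ => q ^ (M ^ 2 + c * M) * rE q M * rE q (M + c))
    hs.norm (fun _ _ => 1) 1 1 (by simp) (fun _ => tendsto_const_nhds)
  have h2 : Filter.Tendsto (fun N => rE q N * rE q (N + c)) Filter.atTop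
      (nhds ((qPochInf q q)⁻¹ * (qPochInf q q)⁻¹)) :=
    (rE_tendsto hq).mul ((Filter.tendsto_add_atTop_iff_nat c).mpr (rE_tendsto hq))
  have h3 := tendsto_nhds_unique h1 (h2.congr fun N => by
    rw [← chu hq N c]
    apply Finset.sum_congr rfl; intros; ring)
  have hne : (qPochInf q q)⁻¹ ≠ 0 := inv_ne_zero (qPochInf_ne hq hq)
  simp only [mul_one] at h3
  rw [tsum_mul_right] at h3
  rw [← mul_right_cancel₀ hne h3]
  exact hs.hasSum

/-- finite Jacobi triple product -/
lemma fin_jtp {Q : ℂ} (hQ : ‖Q‖ < 1) (a b : ℂ) (hab : a * b = Q) (n : ℕ) :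
    ∑ r ∈ Finset.range (n + 1), (-1) ^ r * (b ^ r * Q ^ (r * (r - 1) / 2)
        - a ^ (r + 1) * Q ^ ((r + 1) * r / 2)) * rEE Q n r * rE Q (n + r + 1)
      = qPoch a Q (n + 1) * qPoch b Q n * rE Q (2 * n + 1) := by
  induction n with
  | zero => 
    have := one_sub_pow_ne hQ 0
    simp [rEE, qPoch, rE] at *
  | succ n ih =>
    have hne1 := one_sub_pow_ne hQ (2 * n + 1)
    have hne2 := one_sub_pow_ne hQ (2 * n + 2)
    apply mul_left_cancel₀ hne1
    apply mul_left_cancel₀ hne2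
    have hR : (1 - Q ^ (2 * n + 2 + 1)) * ((1 - Q ^ (2 * n + 1 + 1)) *
        (qPoch a Q (n + 1 + 1) * qPoch b Q (n + 1) * rE Q (2 * (n + 1) + 1)))
        = (1 - a * Q ^ (n + 1)) * (1 - b * Q ^ n) *
          (qPoch a Q (n + 1) * qPoch b Q n * rE Q (2 * n + 1)) := by
      rw [rE_succ hQ (2 * n + 1), rE_succ hQ (2 * n + 1 + 1)]
      simp only [qPoch, Finset.prod_range_succ]
      rw [show 2 * (n + 1) + 1 = 2 * n + 1 + 1 + 1 by ring]
      ring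
    rw [hR, ← ih]
    have ext : ∑ r ∈ Finset.range (n + 1), (-1) ^ r * (b ^ r * Q ^ (r * (r - 1) / 2)
        - a ^ (r + 1) * Q ^ ((r + 1) * r / 2)) * rEE Q n r * rE Q (n + r + 1)
        = ∑ r ∈ Finset.range (n + 1 + 1), (-1) ^ r * (b ^ r * Q ^ (r * (r - 1) / 2)
        - a ^ (r + 1) * Q ^ ((r + 1) * r / 2)) * rEE Q n r * rE Q (n + r + 1) := by
      rw [Finset.sum_range_succ _ (n + 1), rEE_of_lt (Nat.lt_succ_self n)]; simp
    rw [ext]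
    simp only [Finset.mul_sum]
    rw [← sub_eq_zero, ← Finset.sum_sub_distrib]
    have tel := Finset.sum_range_sub (fun r : ℕ => -(-1) ^ r *
      (b ^ r * Q ^ (r * (r - 1) / 2) * (Q ^ (n + 1 - r) * (1 - Q ^ (n + 1 + r))
          + a * Q ^ (n + 1) * (1 - Q ^ (n + 1 - r)))
        - a ^ r * Q ^ (r * (r - 1) / 2) * (Q ^ (n + 1 + r) * (1 - Q ^ (n + 1 - r))
          + a * Q ^ (n + 1) * (1 - Q ^ (n + 1 + r))))
      * rEE Q (n + 1) r * rE Q (n + 1 + r)) (n + 1 + 1)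
    rw [rEE_of_lt (show n + 1 < n + 1 + 1 by omega)] at tel
    simp only [mul_zero, zero_mul, Nat.sub_zero, add_zero, sub_self, pow_zero] at tel
    rw [← tel]
    apply Finset.sum_congr rfl
    intro r hr
    have hr' : r ≤ n + 1 := by simp at hr; omega
    obtain ⟨d, hd⟩ : ∃ d, n + 1 = r + d := ⟨n + 1 - r, by omega⟩
    rw [rEE_succ_left hQ n r, rEE_succ_right hQ (n + 1) r]
    have e1 : n + r + 1 = n + 1 + r := by ring
    have e2 : n + 1 + (r + 1) = n + 1 + r + 1 := by ring
    rw [e1, e2, rE_succ hQ (n + 1 + r)]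
    have tri : Q ^ ((r + 1) * r / 2) = Q ^ (r * (r - 1) / 2) * Q ^ r := by
      rw [← pow_add]; congr 1
      cases r with
      | zero => rfl
      | succ s =>
        have : (s + 1 + 1) * (s + 1) = (s + 1) * (s + 1 - 1) + 2 * (s + 1) := by
          simp only [Nat.add_sub_cancel]; ring
        rw [this]; omega
    rw [show r + 1 - 1 = r by omega, tri]
    generalize Q ^ (r * (r - 1) / 2) = T
    rcases Nat.eq_zero_or_pos d with h | h
    · have : n + 1 = r := by omega
      subst this
      simp only [Nat.sub_self, pow_zero, sub_self, zero_mul, mul_zero, add_zero, sub_zero]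
      generalize rEE Q (n + 1) (n + 1) = E1
      generalize rE Q (n + 1 + (n + 1) + 1) = E2
      have p1 : Q ^ (2 * n + 2 + 1) = (Q ^ n) ^ 2 * Q ^ 3 := by ring
      have p2 : Q ^ (2 * n + 1 + 1) = (Q ^ n) ^ 2 * Q ^ 2 := by ring
      have p3 : Q ^ (n + 1 + (n + 1) + 1) = (Q ^ n) ^ 2 * Q ^ 3 := by ring
      have p4 : Q ^ (n + 1 + (n + 1)) = (Q ^ n) ^ 2 * Q ^ 2 := by ring
      have p5 : Q ^ (n + 1) = Q ^ n * Q := by ring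
      rw [p1, p2, p3, p4, p5, pow_succ a (n + 1)]
      generalize Q ^ n = y
      generalize b ^ (n + 1) = br
      generalize a ^ (n + 1) = ar
      generalize (-1 : ℂ) ^ (n + 1) = s
      subst hab
      ring
    · obtain ⟨d, rfl⟩ : ∃ e, d = e + 1 := ⟨d - 1, by omega⟩
      have e3 : n + 1 - r = d + 1 := by omega
      have e4 : n + 1 - (r + 1) = d := by omega
      rw [e3, e4]
      have hn : n = r + d := by omega
      subst hn
      generalize rEE Q (r + d + 1) r = E1
      generalize rE Q (r + d + 1 + r + 1) = E2
      have p1 : Q ^ (2 * (r + d) + 2 + 1) = (Q ^ r) ^ 2 * (Q ^ d) ^ 2 * Q ^ 3 := by ring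
      have p2 : Q ^ (2 * (r + d) + 1 + 1) = (Q ^ r) ^ 2 * (Q ^ d) ^ 2 * Q ^ 2 := by ring
      have p3 : Q ^ (r + d + 1) = Q ^ r * Q ^ d * Q := by ring
      have p4 : Q ^ (r + d) = Q ^ r * Q ^ d := by ring
      have p5 : Q ^ (r + d + 1 + r + 1) = (Q ^ r) ^ 2 * Q ^ d * Q ^ 2 := by ring
      have p6 : Q ^ (r + d + 1 + r) = (Q ^ r) ^ 2 * Q ^ d * Q := by ring
      have p7 : Q ^ (d + 1) = Q ^ d * Q := by ring
      rw [p1, p2, p3, p4, p5, p6, p7]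
      generalize Q ^ r = y
      generalize Q ^ d = z
      rw [pow_succ b r, pow_succ a r, pow_succ (-1 : ℂ) r]
      generalize b ^ r = br
      generalize a ^ r = ar
      generalize (-1 : ℂ) ^ r = s
      subst hab
      ring

lemma jtp {Q : ℂ} (hQ : ‖Q‖ < 1) (a b : ℂ) (ha : ‖a‖ < 1) (hb : ‖b‖ < 1) (hab : a * b = Q) :
    ∑' r : ℕ, (-1) ^ r * (b ^ r * Q ^ (r * (r - 1) / 2)
        - a ^ (r + 1) * Q ^ ((r + 1) * r / 2))
      = qPochInf Q Q * qPochInf b Q * qPochInf a Q := by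
  obtain ⟨C, hC0, hC⟩ := qPoch_inv_bdd hQ hQ
  set f : ℕ → ℂ := fun r => (-1) ^ r * (b ^ r * Q ^ (r * (r - 1) / 2)
        - a ^ (r + 1) * Q ^ ((r + 1) * r / 2)) with hf
  have hs : Summable fun r => ‖f r‖ := by
    refine Summable.of_nonneg_of_le (fun _ => norm_nonneg _) (fun r => ?_)
      ((summable_geometric_of_lt_one (norm_nonneg _) hb).add
        (summable_geometric_of_lt_one (norm_nonneg _) ha))
    have hp : ∀ m : ℕ, ‖Q‖ ^ m ≤ 1 := fun m => pow_le_one₀ (norm_nonneg _) hQ.le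
    simp only [hf, norm_mul, norm_pow, norm_neg, norm_one, one_pow, one_mul]
    refine (norm_sub_le _ _).trans ?_
    simp only [norm_mul, norm_pow]
    have h1 : ‖a‖ ^ (r + 1) ≤ ‖a‖ ^ r :=
      pow_le_pow_of_le_one (norm_nonneg _) ha.le (Nat.le_succ r)
    apply add_le_add
    · exact mul_le_of_le_one_right (by positivity) (hp _)
    · exact (mul_le_of_le_one_right (by positivity) (hp _)).trans h1
  have h1 := limit_lemma hQ f hs (fun n r => rE Q (n + r + 1)) (qPochInf Q Q)⁻¹ C
    (fun n r => hC _) (fun r => by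
      have := (Filter.tendsto_add_atTop_iff_nat (r + 1)).mpr (rE_tendsto hQ)
      exact this)
  have h2 : Filter.Tendsto (fun n => qPoch a Q (n + 1) * qPoch b Q n * rE Q (2 * n + 1))
      Filter.atTop (nhds (qPochInf a Q * qPochInf b Q * (qPochInf Q Q)⁻¹)) := by
    refine (((Filter.tendsto_add_atTop_iff_nat 1).mpr (qPoch_tendsto hQ a)).mul
      (qPoch_tendsto hQ b)).mul ((rE_tendsto hQ).comp ?_)
    exact Filter.tendsto_atTop_mono (fun n => by omega : ∀ n, n ≤ 2 * n + 1) Filter.tendsto_id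
  have h3 := tendsto_nhds_unique h1 (h2.congr fun n => (fin_jtp hQ a b hab n).symm)
  rw [tsum_mul_right, tsum_mul_right] at h3
  have hne := qPochInf_ne hQ hQ
  field_simp at h3
  rw [h3]; ring

lemma hasSum_shift {f : ℕ → ℂ} {a : ℂ} (h0 : f 0 = 0) (h : HasSum (fun n => f (n + 1)) a) :
    HasSum f a := by
  rw [← hasSum_nat_add_iff' 1]
  simpa [h0] using h

lemma gamma_aux {q : ℂ} (hq : ‖q‖ < 1) (r : ℕ) :
    HasSum (fun M : ℕ => q ^ ((M + r) * (M + r - 1)) * (1 - q ^ (2 * (M + r))) *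
        rE q M * rE q (M + r + r + 1))
      (q ^ (r * (r - 1)) * (1 + q ^ (2 * r + 1) + q ^ (4 * r + 2)) * (qPochInf q q)⁻¹) := by
  have hQ : ∀ M : ℕ, M ^ 2 = M * (M - 1) + M := by
    intro M; cases M with
    | zero => rfl
    | succ s => simp only [Nat.add_sub_cancel]; ring
  have P2 : HasSum (fun M : ℕ => q ^ (M * (M - 1) + 2 * r * M) * (1 - q ^ M) * rE q M *
      rE q (M + 2 * r)) (q ^ (2 * r) * (qPochInf q q)⁻¹) := by
    apply hasSum_shift (by simp)
    refine ((durfee hq (2 * r + 1)).mul_left (q ^ (2 * r))).congr_fun fun M => ?_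
    rw [rE_succ hq M, show M + 1 + 2 * r = M + (2 * r + 1) by ring]
    have e : q ^ ((M + 1) * (M + 1 - 1) + 2 * r * (M + 1))
        = q ^ (2 * r) * q ^ (M ^ 2 + (2 * r + 1) * M) := by
      rw [← pow_add, Nat.add_sub_cancel]; congr 1; ring
    rw [e]; ring
  have P1 : HasSum (fun M : ℕ => q ^ (M ^ 2 + 2 * r * M) * (1 - q ^ M) * rE q M *
      rE q (M + 2 * r + 1)) (q ^ (2 * r + 1) * (qPochInf q q)⁻¹) := by
    apply hasSum_shift (by simp)
    refine ((durfee hq (2 * r + 2)).mul_left (q ^ (2 * r + 1))).congr_fun fun M => ?_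
    rw [rE_succ hq M, show M + 1 + 2 * r + 1 = M + (2 * r + 2) by ring]
    ring
  have h := (((P2.add (durfee hq (2 * r))).add (P1.mul_left (q ^ (2 * r + 1)))).add
    ((durfee hq (2 * r + 1)).mul_left ((q - 1) * q ^ (2 * r)))).mul_left (q ^ (r * (r - 1)))
  have hval : q ^ (r * (r - 1)) * (1 + q ^ (2 * r + 1) + q ^ (4 * r + 2)) * (qPochInf q q)⁻¹
      = q ^ (r * (r - 1)) * (q ^ (2 * r) * (qPochInf q q)⁻¹ + (qPochInf q q)⁻¹ +
        q ^ (2 * r + 1) * (q ^ (2 * r + 1) * (qPochInf q q)⁻¹) +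
        (q - 1) * q ^ (2 * r) * (qPochInf q q)⁻¹) := by ring
  rw [hval]
  refine h.congr_fun fun M => ?_
  have e1 : (M + r) * (M + r - 1) = M * (M - 1) + 2 * r * M + r * (r - 1) := by
    have h1 := hQ (M + r)
    have h2 := hQ M
    have h3 := hQ r
    nlinarith
  rw [e1, hQ M, show M + r + r + 1 = M + 2 * r + 1 by ring, rE_succ hq (M + 2 * r),
    show M + (2 * r + 1) = M + 2 * r + 1 by ring]
  ring

lemma mul_pred_le (n : ℕ) : n ≤ n * (n - 1) + 1 := by
  cases n with
  | zero => omega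
  | succ s => simp only [Nat.add_sub_cancel]; nlinarith

lemma gamma_sum {q : ℂ} (hq : ‖q‖ < 1) (r : ℕ) :
    HasSum (fun n : ℕ => q ^ (n * (n - 1)) * (1 - q ^ (2 * n)) * rEE q n r * rE q (n + r + 1))
      (q ^ (r * (r - 1)) * (1 + q ^ (2 * r + 1) + q ^ (4 * r + 2)) * (qPochInf q q)⁻¹) := by
  rw [← hasSum_nat_add_iff' r]
  rw [Finset.sum_eq_zero, sub_zero]
  · refine (gamma_aux hq r).congr_fun fun M => ?_
    rw [rEE_of_le (by omega), Nat.add_sub_cancel]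
  · intro i hi
    rw [rEE_of_lt (by simpa using hi)]; simp

/-- Iterated chain sums. -/
def chainB {R : Type} [CommRing R] (v : ℕ → ℕ → R) (b : ℕ → R) : ℕ → ℕ → R
  | 0, n => b n
  | k + 1, n => ∑ m ∈ Finset.range (n + 1), v n m * chainB v b k m

/-- Weight of a partition in the chain sum. -/
def chainW {R : Type} [CommRing R] (v : ℕ → ℕ → R) (b : ℕ → R) (k : ℕ) (l : ℕ → ℕ) : R :=
  (∏ i ∈ Finset.range k, v (l i) (l (i + 1))) * b (l k)

/-- Partitions with given first part. -/
abbrev PFib (k n : ℕ) : Type := {l : PartK k // l.1 0 = n}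

/-- Remove the first part. -/
def PFib.equivSucc (k n : ℕ) : PFib (k + 2) n ≃ Σ m : Fin (n + 1), PFib (k + 1) m where
  toFun l := ⟨⟨l.1.1 1, by
      have := l.1.2.1 (Nat.zero_le 1); have := l.2; omega⟩,
    ⟨⟨fun i => l.1.1 (i + 1), fun _ _ h => l.1.2.1 (Nat.succ_le_succ h),
      fun i hi => l.1.2.2 (i + 1) (by omega)⟩, rfl⟩⟩
  invFun p := ⟨⟨fun i => Nat.casesOn i n p.2.1.1, by
      refine antitone_nat_of_succ_le ?_
      intro i
      cases i with
      | zero =>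
        have h1 := p.2.2
        have h2 := p.1.2
        show p.2.1.1 0 ≤ n
        omega
      | succ i => exact p.2.1.2.1 (Nat.le_succ i), by
      intro i hi
      cases i with
      | zero => omega
      | succ i => exact p.2.1.2.2 i (by omega)⟩, rfl⟩
  left_inv l := by
    apply Subtype.ext
    apply Subtype.ext
    funext i
    cases i with
    | zero => exact l.2.symm
    | succ i => rfl
  right_inv p := by
    obtain ⟨⟨m, hm⟩, ⟨⟨l, hl⟩, h⟩⟩ := p
    simp only at h
    subst h
    rfl

lemma chain_fib {R : Type} [NormedField R] (v : ℕ → ℕ → R) (b : ℕ → R) (k : ℕ) : ∀ n : ℕ,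
    Finite (PFib (k + 1) n) ∧
    HasSum (fun l : PFib (k + 1) n => chainW v b k l.1.1) (chainB v b k n) := by
  induction k with
  | zero =>
    intro n
    let u : PFib 1 n := ⟨⟨fun i => if i = 0 then n else 0, by
      intro i j h
      by_cases hi : i = 0 <;> by_cases hj : j = 0 <;> simp [hi, hj]
      omega, by
      intro i hi; simp; omega⟩, by simp⟩
    have hu : ∀ l : PFib 1 n, l = u := by
      intro l
      apply Subtype.ext
      apply Subtype.ext
      funext i
      by_cases hi : i = 0
      · subst hi; simp [u, l.2]
      · simp [u, hi, l.1.2.2 i (by omega)]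
    let _ : Unique (PFib 1 n) := ⟨⟨u⟩, hu⟩
    refine ⟨inferInstance, ?_⟩
    have := hasSum_unique (fun l : PFib 1 n => chainW v b 0 l.1.1)
    convert this using 1
    show b n = _
    simp [chainW]
    congr 1
  | succ k ih =>
    intro n
    have hfin : ∀ m, Finite (PFib (k + 1) m) := fun m => (ih m).1
    have hF : Finite (PFib (k + 2) n) := Finite.of_equiv _ (PFib.equivSucc k n).symm
    refine ⟨hF, ?_⟩
    rw [← (PFib.equivSucc k n).symm.hasSum_iff]
    have e : chainB v b (k + 1) n = ∑ m : Fin (n + 1), v n m * chainB v b k m := by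
      simp only [chainB]
      rw [Finset.sum_range]
    rw [e]
    refine HasSum.sigma_of_hasSum (hasSum_fintype _)
      (g := fun m : Fin (n + 1) => v n m * chainB v b k m) (fun m => ?_) (Summable.of_finite)
    refine (((ih m).2).mul_left (v n m)).congr_fun ?_
    intro l
    have h : chainW v b (k + 1) ((PFib.equivSucc k n).symm ⟨m, l⟩).1.1
        = (∏ i ∈ Finset.range k, v (l.1.1 i) (l.1.1 (i + 1))) * v n (l.1.1 0) * b (l.1.1 k) := by
      unfold chainW
      rw [Finset.prod_range_succ']
      rfl
    refine h.trans ?_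
    rw [l.2]
    unfold chainW
    ring

lemma chu2 {q : ℂ} (hq : ‖q‖ < 1) (r N : ℕ) :
    ∑ m ∈ Finset.range (r + N + 1), q ^ (m ^ 2 + m) * rE q (r + N - m) * rEE q m r
        * rE q (m + r + 1)
      = q ^ (r ^ 2 + r) * rEE q (r + N) r * rE q (r + N + r + 1) := by
  rw [add_assoc r N 1, Finset.sum_range_add, Finset.sum_eq_zero, zero_add]
  · rw [rEE_of_le (by omega), Nat.add_sub_cancel_left,
      show r + N + r + 1 = N + (2 * r + 1) by ring, mul_assoc, ← chu hq N (2 * r + 1),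
      Finset.mul_sum]
    apply Finset.sum_congr rfl
    intro M hM
    have hM' : M ≤ N := by simp at hM; omega
    rw [rEE_of_le (by omega), rEE_of_le hM', Nat.add_sub_cancel_left,
      show r + N - (r + M) = N - M by omega, show r + M + r + 1 = M + (2 * r + 1) by ring]
    ring
  · intro i hi
    rw [rEE_of_lt (by simpa using hi)]; simp

/-- step weights -/
noncomputable def vW (q : ℂ) (n m : ℕ) : ℂ := q ^ (m ^ 2 + m) * rE q (n - m)

/-- last weights -/
noncomputable def bW (q : ℂ) (m : ℕ) : ℂ := (qPoch (-q) q m * qPoch q q m)⁻¹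

/-- the alpha sequence -/
noncomputable def aW (q : ℂ) (j r : ℕ) : ℂ :=
  (-1) ^ r * q ^ (r ^ 2) * (1 - q ^ (2 * r + 1)) * q ^ (j * (r ^ 2 + r))

lemma bailey {q : ℂ} (hq : ‖q‖ < 1) (j : ℕ) : ∀ n : ℕ,
    chainB (vW q) (bW q) j n = ∑ r ∈ Finset.range (n + 1),
      aW q j r * rEE q n r * rE q (n + r + 1) := by
  induction j with
  | zero => intro n; simp only [chainB, bW, base_id hq n, aW, zero_mul, pow_zero, mul_one]
  | succ j ih =>
    intro n
    simp only [chainB]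
    have h1 : ∀ m ∈ Finset.range (n + 1), vW q n m * chainB (vW q) (bW q) j m
        = ∑ r ∈ Finset.range (n + 1), vW q n m *
          (aW q j r * rEE q m r * rE q (m + r + 1)) := by
      intro m hm
      rw [ih m, ← Finset.mul_sum]
      congr 1
      apply Finset.sum_subset
      · intro x hx; simp at hx hm ⊢; omega
      · intro r _ hr
        rw [rEE_of_lt (by simp at hr; omega)]; simp
    rw [Finset.sum_congr rfl h1, Finset.sum_comm]
    apply Finset.sum_congr rfl
    intro r hr
    obtain ⟨N, rfl⟩ : ∃ N, n = r + N := ⟨n - r, by simp at hr; omega⟩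
    have h2 := chu2 hq r N
    have h3 : aW q (j + 1) r = aW q j r * q ^ (r ^ 2 + r) := by
      unfold aW; ring
    rw [h3, mul_assoc, mul_assoc, ← mul_assoc (q ^ (r ^ 2 + r)), ← h2, Finset.mul_sum]
    apply Finset.sum_congr rfl
    intro m _
    unfold vW; ring

lemma chain_bdd {q : ℂ} (hq : ‖q‖ < 1) (j : ℕ) : ∃ K : ℝ, 0 ≤ K ∧ ∀ n,
    0 ≤ chainB (fun n m => ‖vW q n m‖) (fun m => ‖bW q m‖) j n ∧
    chainB (fun n m => ‖vW q n m‖) (fun m => ‖bW q m‖) j n ≤ K := by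
  obtain ⟨C, hC0, hC⟩ := qPoch_inv_bdd hq hq
  induction j with
  | zero =>
    obtain ⟨D, hD0, hD⟩ := qPoch_inv_bdd hq (x := -q) (by simpa using hq)
    refine ⟨D * C, by positivity, fun n => ⟨norm_nonneg _, ?_⟩⟩
    simp only [chainB, bW, mul_inv, norm_mul]
    exact mul_le_mul (hD n) (hC n) (norm_nonneg _) hD0.le
  | succ j ih =>
    obtain ⟨K, hK0, hK⟩ := ih
    have hs := summable_geometric_of_lt_one (norm_nonneg q) hq
    refine ⟨(∑' m : ℕ, ‖q‖ ^ m) * (C * K), mul_nonneg (tsum_nonneg fun _ => by positivity)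
      (by positivity), fun n => ⟨?_, ?_⟩⟩
    · simp only [chainB]
      exact Finset.sum_nonneg fun m _ => mul_nonneg (norm_nonneg _) (hK m).1
    · simp only [chainB]
      calc _ ≤ ∑ m ∈ Finset.range (n + 1), ‖q‖ ^ m * (C * K) := by
            apply Finset.sum_le_sum
            intro m _
            rw [vW, norm_mul, mul_assoc]
            have h1 : ‖q ^ (m ^ 2 + m)‖ ≤ ‖q‖ ^ m := by
              rw [norm_pow]
              exact pow_le_pow_of_le_one (norm_nonneg _) hq.le (by nlinarith)
            have h2 : ‖rE q (n - m)‖ ≤ C := hC _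
            have h3 := hK m
            exact mul_le_mul h1 (mul_le_mul h2 h3.2 h3.1 hC0.le)
              (mul_nonneg (norm_nonneg _) h3.1) (by positivity)
        _ = (∑ m ∈ Finset.range (n + 1), ‖q‖ ^ m) * (C * K) := by rw [Finset.sum_mul]
        _ ≤ _ := by
            gcongr
            exact hs.sum_le_tsum _ (fun _ _ => by positivity)

/-- first-part weight -/
noncomputable def wW (q : ℂ) (n : ℕ) : ℂ := q ^ (n * (n - 1)) * (1 - q ^ (2 * n))

lemma wW_summable {q : ℂ} (hq : ‖q‖ < 1) : Summable fun n => ‖wW q n‖ := by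
  refine Summable.of_nonneg_of_le (fun _ => norm_nonneg _) (fun n => ?_)
    ((summable_pow_of_le hq (fun n => n * (n - 1)) mul_pred_le).mul_right 2)
  rw [wW, norm_mul]
  gcongr
  refine (norm_sub_le _ _).trans ?_
  have : ‖q ^ (2 * n)‖ ≤ 1 := by rw [norm_pow]; exact pow_le_one₀ (norm_nonneg _) hq.le
  rw [norm_one]; linarith

lemma sum_partitions {q : ℂ} (hq : ‖q‖ < 1) (K : ℕ) :
    ∑' lam : PartK (K + 1), wW q (lam.1 0) * chainW (vW q) (bW q) K lam.1
      = ∑' n, wW q n * chainB (vW q) (bW q) K n := by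
  let e := Equiv.sigmaFiberEquiv (fun l : PartK (K + 1) => l.1 0)
  rw [← e.tsum_eq]
  have hterm : ∀ p : Σ n, PFib (K + 1) n, wW q ((e p).1 0) * chainW (vW q) (bW q) K (e p).1
      = wW q p.1 * chainW (vW q) (bW q) K p.2.1.1 := by
    rintro ⟨n, l, hl⟩
    subst hl
    rfl
  have hnorm : ∀ l : ℕ → ℕ, ‖chainW (vW q) (bW q) K l‖
      = chainW (fun n m => ‖vW q n m‖) (fun m => ‖bW q m‖) K l := by
    intro l; simp [chainW, norm_prod]
  have hs : Summable fun p : (Σ n, PFib (K + 1) n) =>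
      wW q p.1 * chainW (vW q) (bW q) K p.2.1.1 := by
    apply Summable.of_norm
    rw [summable_sigma_of_nonneg (fun _ => norm_nonneg _)]
    simp only [norm_mul, hnorm]
    have hh := fun n => ((chain_fib (fun n m => ‖vW q n m‖) (fun m => ‖bW q m‖) K n).2).mul_left
      ‖wW q n‖
    refine ⟨fun n => (hh n).summable, ?_⟩
    simp only [fun n => (hh n).tsum_eq]
    obtain ⟨B, hB0, hB⟩ := chain_bdd hq K
    refine Summable.of_nonneg_of_le (fun n => mul_nonneg (norm_nonneg _) (hB n).1) (fun n => ?_)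
      ((wW_summable hq).mul_right B)
    exact mul_le_mul_of_nonneg_left (hB n).2 (norm_nonneg _)
  have hh := fun n => ((chain_fib (vW q) (bW q) K n).2).mul_left (wW q n)
  calc _ = ∑' p : (Σ n, PFib (K + 1) n), wW q p.1 * chainW (vW q) (bW q) K p.2.1.1 :=
        tsum_congr hterm
    _ = _ := by
      rw [hs.tsum_sigma' (fun n => (hh n).summable)]
      exact tsum_congr fun n => (hh n).tsum_eq

lemma aW_summable {q : ℂ} (hq : ‖q‖ < 1) (j : ℕ) : Summable fun r => ‖aW q j r‖ := by
  refine Summable.of_nonneg_of_le (fun _ => norm_nonneg _) (fun n => ?_)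
    ((summable_pow_of_le hq (fun n => n ^ 2) (fun n => by nlinarith)).mul_right 2)
  have hp : ∀ m : ℕ, ‖q ^ m‖ ≤ 1 := fun m => by
    rw [norm_pow]; exact pow_le_one₀ (norm_nonneg _) hq.le
  have h1 : ‖1 - q ^ (2 * n + 1)‖ ≤ 2 := by
    refine (norm_sub_le _ _).trans ?_
    have := hp (2 * n + 1)
    rw [norm_one]; linarith
  have h2 : ‖((-1 : ℂ)) ^ n‖ = 1 := by simp
  rw [aW, norm_mul, norm_mul, norm_mul, h2, one_mul]
  refine (mul_le_of_le_one_right (by positivity) (hp _)).trans ?_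
  gcongr

lemma swap_sum {q : ℂ} (hq : ‖q‖ < 1) (K : ℕ) :
    ∑' n, wW q n * chainB (vW q) (bW q) K n
      = ∑' r, aW q K r * (q ^ (r * (r - 1)) * (1 + q ^ (2 * r + 1) + q ^ (4 * r + 2)) *
        (qPochInf q q)⁻¹) := by
  obtain ⟨C, hC0, hC⟩ := qPoch_inv_bdd hq hq
  have hE := rEE_bdd hC0 hC
  have h1 : ∀ n, wW q n * chainB (vW q) (bW q) K n
      = ∑' r, wW q n * (aW q K r * rEE q n r * rE q (n + r + 1)) := by
    intro n
    rw [bailey hq K n, Finset.mul_sum, eq_comm]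
    apply tsum_eq_sum
    intro r hr
    rw [rEE_of_lt (by simpa using hr)]; simp
  have hs : Summable (Function.uncurry fun n r =>
      wW q n * (aW q K r * rEE q n r * rE q (n + r + 1))) := by
    refine Summable.of_norm_bounded
      (((wW_summable hq).mul_of_nonneg (aW_summable hq K) (fun _ => norm_nonneg _)
        (fun _ => norm_nonneg _)).mul_right (C * C)) ?_
    rintro ⟨n, r⟩
    simp only [Function.uncurry, norm_mul]
    have h2 : ‖rEE q n r‖ * ‖rE q (n + r + 1)‖ ≤ C * C :=
      mul_le_mul (hE n r) (hC _) (norm_nonneg _) hC0.le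
    calc _ = ‖wW q n‖ * ‖aW q K r‖ * (‖rEE q n r‖ * ‖rE q (n + r + 1)‖) := by ring
      _ ≤ _ := mul_le_mul_of_nonneg_left h2 (by positivity)
  rw [tsum_congr h1, ← hs.tsum_comm]
  apply tsum_congr
  intro r
  refine (((gamma_sum hq r).mul_left (aW q K r)).congr_fun fun n => ?_).tsum_eq
  unfold wW; ring

lemma term_eq (q : ℂ) (K : ℕ) (lam : PartK (K + 1)) :
    q ^ (wtK (K + 1) lam + n2K (K + 1) lam - 2 * lam.1 0) * (1 - q ^ (2 * lam.1 0)) /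
          (qPoch (-q) q (lam.1 (K + 1 - 1)) * pochK q q (K + 1) lam)
      = wW q (lam.1 0) * chainW (vW q) (bW q) K lam.1 := by
  have h0 : lam.1 (K + 1) = 0 := lam.2.2 _ le_rfl
  have hp : pochK q q (K + 1) lam
      = (∏ i ∈ Finset.range K, qPoch q q (lam.1 i - lam.1 (i + 1))) * qPoch q q (lam.1 K) := by
    rw [pochK, Finset.prod_range_succ, h0, Nat.sub_zero]
  have hx : wtK (K + 1) lam + n2K (K + 1) lam - 2 * lam.1 0
      = lam.1 0 * (lam.1 0 - 1) + ∑ i ∈ Finset.range K, (lam.1 (i + 1) ^ 2 + lam.1 (i + 1)) := by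
    rw [wtK, n2K, Finset.sum_range_succ', Finset.sum_range_succ', Finset.sum_add_distrib]
    have : lam.1 0 ^ 2 = lam.1 0 * (lam.1 0 - 1) + lam.1 0 := by
      cases lam.1 0 with
      | zero => rfl
      | succ s => simp only [Nat.add_sub_cancel]; ring
    omega
  rw [hp, hx, pow_add, ← Finset.prod_pow_eq_pow_sum, Nat.add_sub_cancel]
  unfold chainW wW vW bW rE
  rw [Finset.prod_mul_distrib, Finset.prod_inv_distrib, div_eq_mul_inv, mul_inv, mul_inv, mul_inv]
  ring

/-- Identity (25): for `k ≥ 1`, `|q| < 1`,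
`Σ_{l(λ)≤k} q^{|λ|+n_2(λ)-2λ_1} (1-q^{2λ_1}) / ((-q;q)_{λ_k} (q;q)_λ)
  = (q^{2k+2},q^{2k-1},q^3;q^{2k+2})_∞ / (q;q)_∞`. -/
theorem rr_type_25 (k : ℕ) (hk : 1 ≤ k) (q : ℂ) (hq : ‖q‖ < 1) :
    ∑' lam : PartK k,
        q ^ (wtK k lam + n2K k lam - 2 * lam.1 0) * (1 - q ^ (2 * lam.1 0)) /
          (qPoch (-q) q (lam.1 (k - 1)) * pochK q q k lam)
      = qPochInf (q ^ (2 * k + 2)) (q ^ (2 * k + 2)) *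
          qPochInf (q ^ (2 * k - 1)) (q ^ (2 * k + 2)) *
          qPochInf (q ^ 3) (q ^ (2 * k + 2)) / qPochInf q q := by
  obtain ⟨K, rfl⟩ : ∃ K, k = K + 1 := ⟨k - 1, by omega⟩
  rw [tsum_congr (term_eq q K), sum_partitions hq K, swap_sum hq K]
  have hQ : ‖q ^ (2 * (K + 1) + 2)‖ < 1 := by
    rw [norm_pow]; exact pow_lt_one₀ (norm_nonneg _) hq (by omega)
  have ha : ‖q ^ 3‖ < 1 := by
    rw [norm_pow]; exact pow_lt_one₀ (norm_nonneg _) hq (by omega)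
  have hb : ‖q ^ (2 * (K + 1) - 1)‖ < 1 := by
    rw [norm_pow]; exact pow_lt_one₀ (norm_nonneg _) hq (by omega)
  have hab : q ^ 3 * q ^ (2 * (K + 1) - 1) = q ^ (2 * (K + 1) + 2) := by
    rw [← pow_add]; congr 1; omega
  rw [← jtp hQ _ _ ha hb hab, div_eq_mul_inv, ← tsum_mul_right]
  apply tsum_congr
  intro r
  obtain ⟨T, hT⟩ : ∃ T, r * (r - 1) = 2 * T := by
    cases r with
    | zero => exact ⟨0, rfl⟩
    | succ s =>
      obtain ⟨T, hT⟩ := (Nat.even_mul_succ_self s).two_dvd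
      exact ⟨T, by rw [Nat.add_sub_cancel, mul_comm]; exact hT⟩
  have hr2 : r ^ 2 = 2 * T + r := by
    rw [← hT]
    cases r with
    | zero => rfl
    | succ s => simp only [Nat.add_sub_cancel]; ring
  have hT2 : (r + 1) * r = 2 * (T + r) := by nlinarith
  have e1 : r * (r - 1) / 2 = T := by omega
  have e2 : (r + 1) * r / 2 = T + r := by omega
  rw [e1, e2, hT, show 2 * (K + 1) - 1 = 2 * K + 1 by omega]
  have e3 : (q ^ (2 * K + 1)) ^ r * (q ^ (2 * (K + 1) + 2)) ^ T
      = q ^ (r ^ 2) * q ^ (K * (r ^ 2 + r)) * q ^ (2 * T) := by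
    rw [hr2]; ring
  have e4 : (q ^ 3) ^ (r + 1) * (q ^ (2 * (K + 1) + 2)) ^ (T + r)
      = q ^ (r ^ 2) * q ^ (K * (r ^ 2 + r)) * q ^ (2 * T) * q ^ (6 * r + 3) := by
    rw [hr2]; ring
  rw [e3, e4]
  unfold aW
  ring
end

section
/- For |q| < 1: Σ_{n ≥ 0} q^{n^2 + 2n} (-q;q^2)_n / (q^4;q^4)_n = ((-q;q^2)_∞ / (q^2;q^2)_∞) · (q;q^6)_∞ (q^5;q^6)_∞ (q^6;q^6)_∞. -/
/-- Gaussian binomial coefficients by the Pascal recursion. -/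
noncomputable def gb (p : ℂ) : ℕ → ℕ → ℂ
  | 0, 0 => 1
  | 0, _ + 1 => 0
  | _ + 1, 0 => 1
  | n + 1, k + 1 => gb p n k + p ^ (k + 1) * gb p n (k + 1)

lemma gb_zero_right (p : ℂ) (n : ℕ) : gb p n 0 = 1 := by
  cases n <;> rfl

lemma gb_succ (p : ℂ) (n k : ℕ) :
    gb p (n + 1) (k + 1) = gb p n k + p ^ (k + 1) * gb p n (k + 1) := rfl

lemma gb_lt (p : ℂ) (n k : ℕ) (h : n < k) : gb p n k = 0 := by
  induction n generalizing k with
  | zero => cases k with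
    | zero => omega
    | succ k => rfl
  | succ n ih => cases k with
    | zero => omega
    | succ k => rw [gb_succ, ih k (by omega), ih (k + 1) (by omega)]; simp

lemma gb_self (p : ℂ) (n : ℕ) : gb p n n = 1 := by
  induction n with
  | zero => rfl
  | succ n ih => rw [gb_succ, ih, gb_lt p n (n + 1) (by omega)]; simp

lemma qPoch_zero (x q : ℂ) : qPoch x q 0 = 1 := by simp [qPoch]

lemma qPoch_succ (x q : ℂ) (n : ℕ) : qPoch x q (n + 1) = qPoch x q n * (1 - x * q ^ n) := by
  simp [qPoch, Finset.prod_range_succ]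

lemma qPoch_add (x q : ℂ) (m n : ℕ) :
    qPoch x q (m + n) = qPoch x q m * qPoch (x * q ^ m) q n := by
  simp only [qPoch, Finset.prod_range_add]
  congr 1
  refine Finset.prod_congr rfl fun k _ => ?_
  ring

lemma qPoch_succ' (x q : ℂ) (n : ℕ) : qPoch x q (n + 1) = (1 - x) * qPoch (x * q) q n := by
  rw [add_comm, qPoch_add]
  simp [qPoch]

lemma gb_mul (p : ℂ) (s k l : ℕ) (hs : k + l = s) :
    gb p (k + l) k * (qPoch p p k * qPoch p p l) = qPoch p p (k + l) := by
  induction s generalizing k l with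
  | zero =>
    obtain rfl : k = 0 := by omega
    obtain rfl : l = 0 := by omega
    simp [gb, qPoch_zero]
  | succ s ih =>
    cases k with
    | zero => simp [gb_zero_right, qPoch_zero]
    | succ k =>
      cases l with
      | zero => simp [gb_self, qPoch_zero]
      | succ l =>
        have h1 := ih k (l + 1) (by omega)
        have h2 := ih (k + 1) l (by omega)
        have e1 : k + 1 + (l + 1) = (k + (l + 1)) + 1 := by ring
        have e2 : k + 1 + l = k + (l + 1) := by ring
        rw [e2] at h2
        rw [e1, gb_succ]
        rw [qPoch_succ p p (k + (l + 1)), qPoch_succ p p k, qPoch_succ p p l]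
        rw [qPoch_succ p p l] at h1
        rw [qPoch_succ p p k] at h2
        linear_combination (1 - p * p ^ k) * h1 + p ^ (k + 1) * (1 - p * p ^ l) * h2

/-- Terminating q-Vandermonde type sum. -/
lemma vander (p A : ℂ) (M : ℕ) (t : ℂ) :
    ∑ m ∈ Finset.range (M + 1), gb p M m * qPoch A p m * (-1) ^ m * p ^ (m.choose 2) * t ^ m *
      qPoch (A * t * p ^ m) p (M - m) = qPoch t p M := by
  induction M generalizing t with
  | zero => simp [gb, qPoch_zero]
  | succ M ih =>
    rw [qPoch_succ', ← ih (t * p), Finset.mul_sum]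
    rw [Finset.sum_range_succ']
    have hsplit : ∀ m ∈ Finset.range (M + 1),
        gb p (M + 1) (m + 1) * qPoch A p (m + 1) * (-1) ^ (m + 1) * p ^ ((m + 1).choose 2) *
          t ^ (m + 1) * qPoch (A * t * p ^ (m + 1)) p (M + 1 - (m + 1)) =
        gb p M m * qPoch A p (m + 1) * (-1) ^ (m + 1) * p ^ ((m + 1).choose 2) *
          t ^ (m + 1) * qPoch (A * t * p ^ (m + 1)) p (M - m) +
        (fun j => p ^ j * gb p M j * qPoch A p j * (-1) ^ j * p ^ (j.choose 2) *
          t ^ j * qPoch (A * t * p ^ j) p (M + 1 - j)) (m + 1) := by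
      intro m _
      simp only [gb_succ, Nat.add_sub_add_right]
      ring
    rw [Finset.sum_congr rfl hsplit, Finset.sum_add_distrib, add_assoc]
    have h0 : gb p (M + 1) 0 * qPoch A p 0 * (-1) ^ 0 * p ^ (Nat.choose 0 2) *
          t ^ 0 * qPoch (A * t * p ^ 0) p (M + 1 - 0) =
        (fun j => p ^ j * gb p M j * qPoch A p j * (-1) ^ j * p ^ (j.choose 2) *
          t ^ j * qPoch (A * t * p ^ j) p (M + 1 - j)) 0 := by
      simp [gb_zero_right]
    rw [h0, ← Finset.sum_range_succ' (fun j => p ^ j * gb p M j * qPoch A p j * (-1) ^ j *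
      p ^ (j.choose 2) * t ^ j * qPoch (A * t * p ^ j) p (M + 1 - j)) (M + 1),
      Finset.sum_range_succ _ (M + 1)]
    rw [gb_lt p M (M + 1) (by omega)]
    simp only [mul_zero, zero_mul, add_zero]
    rw [← Finset.sum_add_distrib]
    refine Finset.sum_congr rfl fun m hm => ?_
    have hm' : m ≤ M := by simpa [Nat.lt_succ_iff] using hm
    rw [Nat.succ_sub hm', Nat.succ_eq_add_one, qPoch_succ A p m, qPoch_succ']
    have hc : (m + 1).choose 2 = m.choose 2 + m := by
      rw [Nat.choose_succ_succ' m 1]; simp [add_comm]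
    have e1 : A * t * p ^ (m + 1) = A * (t * p) * p ^ m := by ring
    have e2 : A * t * p ^ m * p = A * (t * p) * p ^ m := by ring
    rw [hc, e1, e2]
    ring

/-- Inverse of `(p;p)_{n-r}`, zero for `r > n`. -/
noncomputable def iv (p : ℂ) (n r : ℕ) : ℂ := if r ≤ n then (qPoch p p (n - r))⁻¹ else 0

lemma one_sub_pow_ne_s16 {p : ℂ} (hp : ‖p‖ < 1) (n : ℕ) : 1 - p * p ^ n ≠ 0 := by
  intro h
  have h1 : p ^ (n + 1) = 1 := by rw [pow_succ']; linear_combination -h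
  have h2 : ‖p‖ ^ (n + 1) = 1 := by rw [← norm_pow, h1, norm_one]
  have h3 := pow_lt_one₀ (norm_nonneg p) hp (Nat.succ_ne_zero n)
  rw [Nat.succ_eq_add_one] at h3
  linarith

lemma qPoch_ne {p : ℂ} (hp : ‖p‖ < 1) (n : ℕ) : qPoch p p n ≠ 0 :=
  Finset.prod_ne_zero_iff.mpr fun k _ => one_sub_pow_ne_s16 hp k

lemma iv_succ_succ (p : ℂ) (n r : ℕ) : iv p (n + 1) (r + 1) = iv p n r := by
  simp [iv]

lemma iv_step {p : ℂ} (hp : ‖p‖ < 1) (n r : ℕ) :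
    iv p n r * p ^ r = iv p (n + 1) r * (p ^ r - p ^ (n + 1)) := by
  unfold iv
  by_cases h : r ≤ n
  · obtain ⟨d, rfl⟩ := Nat.exists_eq_add_of_le h
    have e1 : r + d - r = d := by omega
    have e2 : r + d + 1 - r = d + 1 := by omega
    rw [if_pos h, if_pos (by omega), e1, e2, qPoch_succ]
    have := qPoch_ne hp d
    have := one_sub_pow_ne_s16 hp d
    field_simp
    ring
  · by_cases h' : r = n + 1
    · subst h'; simp
    · rw [if_neg h, if_neg (by omega)]; simp

/-- The Bailey pair. -/
lemma bailey_pair {Q : ℂ} (hQ : ‖Q‖ < 1) (h0 : Q ≠ 0) (n : ℕ) :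
    ∑ r ∈ Finset.range (n + 1), (-1) ^ r * Q ^ (r ^ 2) * (1 - Q ^ (2 * r + 1)) * iv Q n r /
      qPoch Q Q (n + r + 1) = (qPoch (Q ^ 2) (Q ^ 2) n)⁻¹ := by
  have hQ2 : ‖Q ^ 2‖ < 1 := by
    rw [norm_pow]; exact pow_lt_one₀ (norm_nonneg _) hQ (by norm_num)
  induction n with
  | zero =>
    have := one_sub_pow_ne_s16 hQ 0
    simp only [pow_zero, mul_one] at this
    simp [iv, qPoch, this]
  | succ n ih =>
    have hne := one_sub_pow_ne_s16 hQ2 n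
    have hP := qPoch_ne hQ2 n
    rw [qPoch_succ]
    have key : ∀ r, (1 - Q ^ 2 * (Q ^ 2) ^ n) * ((-1) ^ r * Q ^ (r ^ 2) * (1 - Q ^ (2 * r + 1)) *
        iv Q (n + 1) r / qPoch Q Q (n + 1 + r + 1)) - (-1) ^ r * Q ^ (r ^ 2) *
          (1 - Q ^ (2 * r + 1)) * iv Q n r / qPoch Q Q (n + r + 1) =
        (fun j : ℕ => -(-1) ^ j * Q ^ (j ^ 2) / Q ^ j * Q ^ (n + 1) * (1 - Q ^ (2 * j)) *
          iv Q (n + 1) j / qPoch Q Q (n + j + 1)) (r + 1) -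
        (fun j : ℕ => -(-1) ^ j * Q ^ (j ^ 2) / Q ^ j * Q ^ (n + 1) * (1 - Q ^ (2 * j)) *
          iv Q (n + 1) j / qPoch Q Q (n + j + 1)) r := by
      intro r
      have hr : Q ^ r ≠ 0 := pow_ne_zero _ h0
      have hs := iv_step hQ n r
      have hs' : iv Q n r = iv Q (n + 1) r * (Q ^ r - Q ^ (n + 1)) / Q ^ r := by
        rw [← hs]; field_simp
      have e1 : n + 1 + r + 1 = (n + r + 1) + 1 := by ring
      have e2 : n + (r + 1) + 1 = (n + r + 1) + 1 := by ring
      simp only [iv_succ_succ]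
      rw [e1, e2, qPoch_succ, hs']
      have hc := qPoch_ne hQ (n + r + 1)
      have hd := one_sub_pow_ne_s16 hQ (n + r + 1)
      have e3 : (r + 1) ^ 2 = r ^ 2 + 2 * r + 1 := by ring
      have e4 : ∀ k, Q ^ (2 * k) = (Q ^ k) ^ 2 := fun k => by rw [← pow_mul']
      have e5 : (Q ^ 2) ^ n = (Q ^ n) ^ 2 := by rw [← pow_mul, ← pow_mul']
      rw [e3, e5]
      simp only [pow_add, e4, pow_one] at hd ⊢
      generalize hdd : 1 - Q * (Q ^ n * Q ^ r * Q) = d at hd ⊢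
      generalize iv Q (n + 1) r = i
      generalize Q ^ r = x at hdd hr ⊢
      generalize Q ^ n = y at hdd ⊢
      field_simp
      subst hdd
      ring
    have hsum := Finset.sum_congr (rfl : Finset.range (n + 2) = Finset.range (n + 2))
      (fun r _ => key r)
    rw [Finset.sum_range_sub (fun j : ℕ => -(-1) ^ j * Q ^ (j ^ 2) / Q ^ j * Q ^ (n + 1) *
      (1 - Q ^ (2 * j)) * iv Q (n + 1) j / qPoch Q Q (n + j + 1)), Finset.sum_sub_distrib, ← Finset.mul_sum,
      Finset.sum_range_succ _ (n + 1)] at hsum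
    rw [Finset.sum_range_succ (fun r => (-1) ^ r * Q ^ (r ^ 2) *
          (1 - Q ^ (2 * r + 1)) * iv Q n r / qPoch Q Q (n + r + 1)) (n + 1), ih,
          ← Finset.sum_range_succ] at hsum
    have z1 : iv Q n (n + 1) = 0 := by simp [iv]
    have z2 : iv Q (n + 1) (n + 2) = 0 := by simp [iv]
    simp only [z1, z2, mul_zero, zero_div, add_zero, pow_zero, sub_self, zero_mul] at hsum
    rw [mul_inv, ← div_eq_mul_inv, eq_div_iff hne]
    linear_combination hsum

lemma two_choose (d : ℕ) : 2 * d.choose 2 + d = d ^ 2 := by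
  induction d with
  | zero => rfl
  | succ d ih =>
    have hc : (d + 1).choose 2 = d.choose 2 + d := by
      rw [Nat.choose_succ_succ' d 1]; simp [add_comm]
    rw [hc]; nlinarith

lemma gb_eq {p : ℂ} (hp : ‖p‖ < 1) (k l : ℕ) :
    gb p (k + l) k = qPoch p p (k + l) * ((qPoch p p k)⁻¹ * (qPoch p p l)⁻¹) := by
  have h := gb_mul p _ k l rfl
  have h1 := qPoch_ne hp k
  have h2 := qPoch_ne hp l
  rw [← h]; field_simp

lemma iv_add (p : ℂ) (r d : ℕ) : iv p (r + d) r = (qPoch p p d)⁻¹ := by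
  simp [iv]

lemma norm_pow_lt {q : ℂ} (hq : ‖q‖ < 1) (k : ℕ) : ‖q ^ (k + 1)‖ < 1 := by
  rw [norm_pow]; exact pow_lt_one₀ (norm_nonneg _) hq (by omega)

lemma one_add_ne {q : ℂ} (hq : ‖q‖ < 1) (k : ℕ) : 1 + q ^ (k + 1) ≠ 0 := by
  intro h
  have h1 : q ^ (k + 1) = -1 := by linear_combination h
  have h2 := norm_pow_lt hq k
  rw [h1] at h2
  simp at h2

lemma rr_inner_sum {q : ℂ} (hq : ‖q‖ < 1) (r M : ℕ) :
    ∑ n ∈ Finset.range (r + M + 1), qPoch (-q) (q ^ 2) n * q ^ (n ^ 2 + 2 * n) *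
      iv (q ^ 2) (r + M) n * (iv (q ^ 2) n r / qPoch (q ^ 2) (q ^ 2) (n + r + 1)) =
    qPoch (-q) (q ^ 2) (r + M + 1) * q ^ (r ^ 2 + 2 * r) / (1 + q ^ (2 * r + 1)) *
      (iv (q ^ 2) (r + M) r / qPoch (q ^ 2) (q ^ 2) (r + M + r + 1)) := by
  have hQ : ‖q ^ 2‖ < 1 := norm_pow_lt hq 1
  rw [add_assoc, Finset.sum_range_add]
  have hz : ∑ n ∈ Finset.range r, qPoch (-q) (q ^ 2) n * q ^ (n ^ 2 + 2 * n) *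
      iv (q ^ 2) (r + M) n * (iv (q ^ 2) n r / qPoch (q ^ 2) (q ^ 2) (n + r + 1)) = 0 := by
    refine Finset.sum_eq_zero fun n hn => ?_
    have : ¬ r ≤ n := by simpa using hn
    simp [iv, this]
  rw [hz, zero_add]
  have hv := vander (q ^ 2) (-q ^ (2 * r + 1)) M (-q ^ (2 * r + 3))
  have hterm : ∀ m ∈ Finset.range (M + 1), qPoch (-q) (q ^ 2) (r + m) *
      q ^ ((r + m) ^ 2 + 2 * (r + m)) * iv (q ^ 2) (r + M) (r + m) *
        (iv (q ^ 2) (r + m) r / qPoch (q ^ 2) (q ^ 2) (r + m + r + 1)) =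
      (qPoch (-q) (q ^ 2) r * q ^ (r ^ 2 + 2 * r) * (qPoch (q ^ 2) (q ^ 2) M)⁻¹ *
        (qPoch (q ^ 2) (q ^ 2) (r + M + r + 1))⁻¹) *
      (gb (q ^ 2) M m * qPoch (-q ^ (2 * r + 1)) (q ^ 2) m * (-1) ^ m * (q ^ 2) ^ (m.choose 2) *
        (-q ^ (2 * r + 3)) ^ m *
        qPoch (-q ^ (2 * r + 1) * (-q ^ (2 * r + 3)) * (q ^ 2) ^ m) (q ^ 2) (M - m)) := by
    intro m hm
    have hm' : m ≤ M := by simpa [Nat.lt_succ_iff] using hm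
    obtain ⟨l, rfl⟩ := Nat.exists_eq_add_of_le hm'
    have e1 : r + (m + l) = r + m + l := by ring
    have e2 : m + l - m = l := by omega
    have e3 : r + m + l + r + 1 = (r + m + r + 1) + l := by ring
    have e4 : q ^ 2 * (q ^ 2) ^ (r + m + r + 1) =
        -q ^ (2 * r + 1) * (-q ^ (2 * r + 3)) * (q ^ 2) ^ m := by ring
    have e5 : -q * (q ^ 2) ^ r = -q ^ (2 * r + 1) := by ring
    rw [gb_eq hQ m l, iv_add, e1, iv_add, e2, e3, qPoch_add _ _ (r + m + r + 1) l, e4,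
      qPoch_add _ _ r m, e5]
    have h1 := qPoch_ne hQ (m + l)
    have h2 := qPoch_ne hQ m
    have h3 := qPoch_ne hQ l
    have h4 := qPoch_ne hQ (r + m + r + 1)
    have h5 := qPoch_ne hQ ((r + m + r + 1) + l)
    rw [qPoch_add _ _ (r + m + r + 1) l, e4] at h5
    have h6 := right_ne_zero_of_mul h5
    have e6 : q ^ ((r + m) ^ 2 + 2 * (r + m)) = q ^ (r ^ 2 + 2 * r) *
        ((-1) ^ m * (q ^ 2) ^ (m.choose 2) * (-q ^ (2 * r + 3)) ^ m) := by
      have : (-q ^ (2 * r + 3)) ^ m = (-1) ^ m * q ^ ((2 * r + 3) * m) := by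
        rw [neg_pow, pow_mul]
      rw [this]
      have s1 : ((-1 : ℂ) ^ m) * (-1) ^ m = 1 := by rw [← mul_pow]; simp
      have : q ^ (r ^ 2 + 2 * r) * ((-1) ^ m * (q ^ 2) ^ (m.choose 2) *
          ((-1) ^ m * q ^ ((2 * r + 3) * m))) = ((-1 : ℂ) ^ m * (-1) ^ m) *
          q ^ (r ^ 2 + 2 * r + 2 * m.choose 2 + (2 * r + 3) * m) := by
        rw [← pow_mul]; ring
      rw [this, s1, one_mul]
      congr 1
      have := two_choose m
      nlinarith
    rw [e6]
    generalize qPoch (-q ^ (2 * r + 1) * (-q ^ (2 * r + 3)) * (q ^ 2) ^ m) (q ^ 2) l = u at *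
    field_simp
  rw [Finset.sum_congr rfl hterm, ← Finset.mul_sum, hv, iv_add]
  have e5 : -q * (q ^ 2) ^ r = -q ^ (2 * r + 1) := by ring
  have e6 : -q ^ (2 * r + 1) * q ^ 2 = -q ^ (2 * r + 3) := by ring
  rw [qPoch_add _ _ r (M + 1), e5, qPoch_succ' (-q ^ (2 * r + 1)), e6]
  have := one_add_ne hq (2 * r)
  have h1 := qPoch_ne hQ M
  have h5 := qPoch_ne hQ (r + M + r + 1)
  rw [sub_neg_eq_add]
  field_simp

lemma rr_star {q : ℂ} (hq : ‖q‖ < 1) (h0 : q ≠ 0) (N : ℕ) :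
    ∑ n ∈ Finset.range (N + 1), q ^ (n ^ 2 + 2 * n) * qPoch (-q) (q ^ 2) n /
      qPoch (q ^ 4) (q ^ 4) n * iv (q ^ 2) N n =
    qPoch (-q) (q ^ 2) (N + 1) * ∑ r ∈ Finset.range (N + 1),
      ((-1) ^ r * q ^ (3 * r ^ 2 + 2 * r) * (1 - q ^ (2 * r + 1))) *
        (iv (q ^ 2) N r / qPoch (q ^ 2) (q ^ 2) (N + r + 1)) := by
  have hQ : ‖q ^ 2‖ < 1 := norm_pow_lt hq 1
  have hb : ∀ n ∈ Finset.range (N + 1), q ^ (n ^ 2 + 2 * n) * qPoch (-q) (q ^ 2) n /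
      qPoch (q ^ 4) (q ^ 4) n * iv (q ^ 2) N n = ∑ r ∈ Finset.range (N + 1),
      ((-1) ^ r * (q ^ 2) ^ (r ^ 2) * (1 - (q ^ 2) ^ (2 * r + 1))) *
      (qPoch (-q) (q ^ 2) n * q ^ (n ^ 2 + 2 * n) *
      iv (q ^ 2) N n * (iv (q ^ 2) n r / qPoch (q ^ 2) (q ^ 2) (n + r + 1))) := by
    intro n hn
    have hp := bailey_pair hQ (pow_ne_zero 2 h0) n
    have e : (q ^ 2) ^ 2 = q ^ 4 := by ring
    rw [e] at hp
    rw [div_eq_mul_inv, ← hp]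
    have hsub : Finset.range (n + 1) ⊆ Finset.range (N + 1) := by
      simp at hn ⊢; omega
    rw [Finset.sum_subset hsub (fun r _ hr => by
      have : ¬ r ≤ n := by simp at hr; omega
      simp [iv, this]), Finset.mul_sum, Finset.sum_mul]
    refine Finset.sum_congr rfl fun r _ => ?_
    ring
  rw [Finset.sum_congr rfl hb, Finset.sum_comm, Finset.mul_sum]
  refine Finset.sum_congr rfl fun r hr => ?_
  have hr' : r ≤ N := by simpa [Nat.lt_succ_iff] using hr
  obtain ⟨M, rfl⟩ := Nat.exists_eq_add_of_le hr'
  rw [← Finset.mul_sum, rr_inner_sum hq]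
  have := one_add_ne hq (2 * r)
  have e : 1 - (q ^ 2) ^ (2 * r + 1) = (1 + q ^ (2 * r + 1)) * (1 - q ^ (2 * r + 1)) := by ring
  rw [e]
  field_simp
  ring

lemma refl_poch {q : ℂ} (h0 : q ≠ 0) (N : ℕ) :
    (-1) ^ N * q ^ (3 * N ^ 2 + 2 * N) * qPoch (q / (q ^ 6) ^ N) (q ^ 6) N =
      qPoch (q ^ 5) (q ^ 6) N := by
  induction N with
  | zero => simp [qPoch_zero]
  | succ N ih =>
    rw [qPoch_succ', qPoch_succ, ← ih]
    have e1 : q / (q ^ 6) ^ (N + 1) * q ^ 6 = q / (q ^ 6) ^ N := by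
      field_simp
      ring
    have e2 : q ^ (3 * (N + 1) ^ 2 + 2 * (N + 1)) = q ^ (3 * N ^ 2 + 2 * N) *
        ((q ^ 6) ^ N * q ^ 5) := by ring
    have e3 : q / (q ^ 6) ^ (N + 1) = 1 / ((q ^ 6) ^ N * q ^ 5) := by
      field_simp
      ring
    rw [e1, e2, e3]
    have : (q ^ 6) ^ N ≠ 0 := pow_ne_zero _ (pow_ne_zero _ h0)
    field_simp
    ring

lemma jtp_fin {q : ℂ} (hq : ‖q‖ < 1) (h0 : q ≠ 0) (N : ℕ) :
    ∑ r ∈ Finset.range (N + 1), ((-1) ^ r * q ^ (3 * r ^ 2 + 2 * r) * (1 - q ^ (2 * r + 1))) *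
        (iv (q ^ 6) N r / qPoch (q ^ 6) (q ^ 6) (N + r + 1)) =
      qPoch q (q ^ 6) (N + 1) * qPoch (q ^ 5) (q ^ 6) N / qPoch (q ^ 6) (q ^ 6) (2 * N + 1) := by
  have hQ : ‖q ^ 6‖ < 1 := norm_pow_lt hq 5
  have hv := vander (q ^ 6) 0 (2 * N + 1) (q / (q ^ 6) ^ N)
  have hone : ∀ k, qPoch 0 (q ^ 6) k = 1 := fun k => by simp [qPoch]
  simp only [zero_mul, hone, mul_one] at hv
  have e1 : 2 * N + 1 + 1 = (N + 1) + (N + 1) := by ring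
  have e2 : 2 * N + 1 = N + (N + 1) := by ring
  have e3 : q / (q ^ 6) ^ N * (q ^ 6) ^ N = q := by field_simp
  rw [e1, Finset.sum_range_add, ← Finset.sum_range_reflect, ← Finset.sum_add_distrib] at hv
  rw [eq_div_iff (qPoch_ne hQ _), ← refl_poch h0]
  have hv2 : qPoch (q / (q ^ 6) ^ N) (q ^ 6) (2 * N + 1) =
      qPoch (q / (q ^ 6) ^ N) (q ^ 6) N * qPoch q (q ^ 6) (N + 1) := by
    rw [e2, qPoch_add, e3]
  rw [hv2] at hv
  have : qPoch q (q ^ 6) (N + 1) * ((-1) ^ N * q ^ (3 * N ^ 2 + 2 * N) *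
      qPoch (q / (q ^ 6) ^ N) (q ^ 6) N) = ((-1) ^ N * q ^ (3 * N ^ 2 + 2 * N)) *
      (qPoch (q / (q ^ 6) ^ N) (q ^ 6) N * qPoch q (q ^ 6) (N + 1)) := by ring
  rw [this, ← hv, Finset.mul_sum, Finset.sum_mul]
  refine Finset.sum_congr rfl fun r hr => ?_
  have hr' : r ≤ N := by simpa [Nat.lt_succ_iff] using hr
  obtain ⟨d, rfl⟩ := Nat.exists_eq_add_of_le hr'
  have f1 : r + d + 1 - 1 - r = d := by omega
  have f2 : 2 * (r + d) + 1 = d + (2 * r + d + 1) := by ring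
  have f3 : d + (2 * r + d + 1) = (2 * r + d + 1) + d := by ring
  have f4 : r + d + 1 + r = 2 * r + d + 1 := by ring
  have f5 : r + d + r + 1 = 2 * r + d + 1 := by ring
  have g1 : gb (q ^ 6) (2 * (r + d) + 1) d = qPoch (q ^ 6) (q ^ 6) (2 * (r + d) + 1) *
      ((qPoch (q ^ 6) (q ^ 6) d)⁻¹ * (qPoch (q ^ 6) (q ^ 6) (2 * r + d + 1))⁻¹) := by
    rw [f2, gb_eq hQ]
  have g2 : gb (q ^ 6) (2 * (r + d) + 1) (2 * r + d + 1) =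
      qPoch (q ^ 6) (q ^ 6) (2 * (r + d) + 1) *
      ((qPoch (q ^ 6) (q ^ 6) d)⁻¹ * (qPoch (q ^ 6) (q ^ 6) (2 * r + d + 1))⁻¹) := by
    rw [f2, f3, gb_eq hQ]; ring
  rw [f1, f4, f5, g1, g2, iv_add]
  have hpow : ∀ m a : ℕ, 3 * (r + d) ^ 2 + 2 * (r + d) + 6 * m.choose 2 + m =
      a + 6 * (r + d) * m → q ^ (3 * (r + d) ^ 2 + 2 * (r + d)) * ((q ^ 6) ^ (m.choose 2) *
        (q / (q ^ 6) ^ (r + d)) ^ m) = q ^ a := by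
    intro m a h
    rw [div_pow, ← pow_mul, ← pow_mul, ← pow_mul, mul_div_assoc', mul_div_assoc',
      div_eq_iff (pow_ne_zero _ h0), ← pow_add, ← pow_add, ← pow_add]
    congr 1
    linarith
  have p1 := hpow d (3 * r ^ 2 + 2 * r) (by have := two_choose d; nlinarith)
  have p2 := hpow (2 * r + d + 1) (3 * r ^ 2 + 2 * r + (2 * r + 1))
    (by have := two_choose (2 * r + d + 1); nlinarith)
  have s1 : ((-1 : ℂ) ^ (r + d)) * (-1) ^ d = (-1) ^ r := by
    rw [← pow_add, add_assoc, pow_add, ← two_mul, pow_mul]; simp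
  have s2 : ((-1 : ℂ) ^ (r + d)) * (-1) ^ (2 * r + d + 1) = -(-1) ^ r := by
    rw [← pow_add, show r + d + (2 * r + d + 1) = r + 1 + 2 * (r + d) by ring, pow_add _ (r + 1),
      pow_mul, pow_succ]; simp
  rw [pow_add q _ (2 * r + 1)] at p2
  generalize qPoch (q ^ 6) (q ^ 6) (2 * (r + d) + 1) = u
  generalize (qPoch (q ^ 6) (q ^ 6) d)⁻¹ = v
  rw [div_eq_mul_inv]
  generalize (qPoch (q ^ 6) (q ^ 6) (2 * r + d + 1))⁻¹ = w
  generalize q ^ (3 * (r + d) ^ 2 + 2 * (r + d)) = K at *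
  generalize (q / (q ^ 6) ^ (r + d)) = t at *
  have t1 : (-1) ^ (r + d) * K * (u * (v * w) * (-1) ^ d * (q ^ 6) ^ (d.choose 2) * t ^ d) =
      u * v * w * ((-1) ^ (r + d) * (-1) ^ d) * (K * ((q ^ 6) ^ (d.choose 2) * t ^ d)) := by ring
  have t2 : (-1) ^ (r + d) * K * (u * (v * w) * (-1) ^ (2 * r + d + 1) *
        (q ^ 6) ^ ((2 * r + d + 1).choose 2) * t ^ (2 * r + d + 1)) =
      u * v * w * ((-1) ^ (r + d) * (-1) ^ (2 * r + d + 1)) *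
        (K * ((q ^ 6) ^ ((2 * r + d + 1).choose 2) * t ^ (2 * r + d + 1))) := by ring
  rw [mul_add, t1, t2, p1, p2, s1, s2]
  ring

open Filter Topology in
lemma qPoch_tendsto_s16 {p : ℂ} (hp : ‖p‖ < 1) (x : ℂ) :
    Tendsto (qPoch x p) atTop (𝓝 (qPochInf x p)) := by
  have hs : Summable fun k : ℕ => ‖-(x * p ^ k)‖ := by
    simp only [norm_neg, norm_mul, norm_pow]
    exact (summable_geometric_of_lt_one (norm_nonneg _) hp).mul_left _
  have hm := (multipliable_one_add_of_summable hs).hasProd.tendsto_prod_nat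
  simp only [← sub_eq_add_neg] at hm
  exact hm

lemma qPochInf_ne_s16 {p : ℂ} (hp : ‖p‖ < 1) : qPochInf p p ≠ 0 := by
  have hs : Summable fun k : ℕ => ‖-(p * p ^ k)‖ := by
    simp only [norm_neg, norm_mul, norm_pow]
    exact (summable_geometric_of_lt_one (norm_nonneg _) hp).mul_left _
  have := tprod_one_add_ne_zero_of_summable (f := fun k : ℕ => -(p * p ^ k))
    (fun k => by rw [← sub_eq_add_neg]; exact one_sub_pow_ne_s16 hp k) hs
  simp only [← sub_eq_add_neg] at this
  exact this

open Filter Topology in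
lemma bdd_of_tendsto {u : ℕ → ℂ} {a : ℂ} (h : Tendsto u atTop (𝓝 a)) :
    ∃ C : ℝ, 0 ≤ C ∧ ∀ n, ‖u n‖ ≤ C := by
  obtain ⟨C, hC⟩ := (Metric.isBounded_range_of_tendsto u h).exists_norm_le
  have hC' : ∀ n, ‖u n‖ ≤ C := fun n => hC _ ⟨n, rfl⟩
  exact ⟨C, (norm_nonneg _).trans (hC' 0), hC'⟩

open Filter Topology in
lemma inv_tendsto {p : ℂ} (hp : ‖p‖ < 1) :
    Tendsto (fun n => (qPoch p p n)⁻¹) atTop (𝓝 (qPochInf p p)⁻¹) :=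
  (qPoch_tendsto_s16 hp p).inv₀ (qPochInf_ne_s16 hp)

open Filter Topology in
lemma iv_tendsto {p : ℂ} (hp : ‖p‖ < 1) (r : ℕ) :
    Tendsto (fun N => iv p N r) atTop (𝓝 (qPochInf p p)⁻¹) := by
  have h := (inv_tendsto hp).comp (tendsto_sub_atTop_nat r)
  refine h.congr' ?_
  filter_upwards [eventually_ge_atTop r] with N hN
  simp [iv, hN]

lemma iv_bound {p : ℂ} {C : ℝ} (hC : 0 ≤ C) (h : ∀ n, ‖(qPoch p p n)⁻¹‖ ≤ C) (N r : ℕ) :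
    ‖iv p N r‖ ≤ C := by
  unfold iv
  split_ifs
  · exact h _
  · simpa using hC

open Filter Topology in
lemma tannery {a : ℕ → ℂ} (ha : Summable fun n => ‖a n‖) {w : ℕ → ℕ → ℂ} {W : ℂ} {C : ℝ}
    (hC : ∀ N r, ‖w N r‖ ≤ C) (hw : ∀ r, Tendsto (fun N => w N r) atTop (𝓝 W))
    (hz : ∀ N r, N < r → w N r = 0) :
    Tendsto (fun N => ∑ r ∈ Finset.range (N + 1), a r * w N r) atTop (𝓝 ((∑' r, a r) * W)) := by
  have h := tendsto_tsum_of_dominated_convergence (𝓕 := atTop) (f := fun N r => a r * w N r)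
    (g := fun r => a r * W) (bound := fun r => ‖a r‖ * C) (ha.mul_right C)
    (fun r => (hw r).const_mul (a r))
    (Eventually.of_forall fun N r => by
      rw [norm_mul]; exact mul_le_mul_of_nonneg_left (hC N r) (norm_nonneg _))
  rw [tsum_mul_right] at h
  refine h.congr fun N => ?_
  refine tsum_eq_sum fun r hr => ?_
  rw [hz N r (by simp at hr; omega), mul_zero]

lemma iv_zero (p : ℂ) (N r : ℕ) (h : N < r) : iv p N r = 0 := by
  simp [iv, h]

lemma summable_aux {q : ℂ} (hq : ‖q‖ < 1) {b : ℕ → ℂ} {e : ℕ → ℕ} {C : ℝ}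
    (hb : ∀ n, ‖b n‖ ≤ C) (he : ∀ n, n ≤ e n) : Summable fun n => ‖q ^ e n * b n‖ := by
  refine Summable.of_nonneg_of_le (fun _ => norm_nonneg _) (fun n => ?_)
    ((summable_geometric_of_lt_one (norm_nonneg _) hq).mul_right C)
  rw [norm_mul, norm_pow]
  exact mul_le_mul (pow_le_pow_of_le_one (norm_nonneg _) hq.le (he n)) (hb n) (norm_nonneg _)
    (by positivity)

open Filter Topology in
lemma theta_lim {q : ℂ} (hq : ‖q‖ < 1) {p : ℂ} (hp : ‖p‖ < 1) :
    Tendsto (fun N => ∑ r ∈ Finset.range (N + 1),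
      ((-1) ^ r * q ^ (3 * r ^ 2 + 2 * r) * (1 - q ^ (2 * r + 1))) *
        (iv p N r / qPoch p p (N + r + 1))) atTop
      (𝓝 ((∑' r : ℕ, ((-1) ^ r * q ^ (3 * r ^ 2 + 2 * r) * (1 - q ^ (2 * r + 1)))) *
        ((qPochInf p p)⁻¹ * (qPochInf p p)⁻¹))) := by
  obtain ⟨C, hC0, hC⟩ := bdd_of_tendsto (inv_tendsto hp)
  refine tannery (C := C * C) ?_ ?_ ?_ ?_
  · have := summable_aux hq (b := fun r => (-1) ^ r * (1 - q ^ (2 * r + 1)))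
      (e := fun r => 3 * r ^ 2 + 2 * r) (C := 2) (fun r => by
        rw [norm_mul, norm_pow, norm_neg, norm_one, one_pow, one_mul]
        refine (norm_sub_le _ _).trans ?_
        have := (norm_pow_lt hq (2 * r)).le
        rw [norm_one]; linarith) (fun r => by nlinarith)
    refine this.congr fun r => ?_
    congr 1
    ring
  · intro N r
    rw [div_eq_mul_inv, norm_mul]
    exact mul_le_mul (iv_bound hC0 hC N r) (hC _) (norm_nonneg _) hC0
  · intro r
    simp only [div_eq_mul_inv]
    refine (iv_tendsto hp r).mul ?_
    have h := (inv_tendsto hp).comp (tendsto_add_atTop_nat (r + 1))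
    exact h
  · intro N r h
    rw [iv_zero p N r h, zero_div]

open Filter Topology in
lemma theta_eq {q : ℂ} (hq : ‖q‖ < 1) (h0 : q ≠ 0) :
    ∑' r : ℕ, ((-1) ^ r * q ^ (3 * r ^ 2 + 2 * r) * (1 - q ^ (2 * r + 1))) =
      qPochInf q (q ^ 6) * qPochInf (q ^ 5) (q ^ 6) * qPochInf (q ^ 6) (q ^ 6) := by
  have hp : ‖q ^ 6‖ < 1 := norm_pow_lt hq 5
  have h1 := theta_lim hq hp
  simp only [jtp_fin hq h0] at h1
  have h2 : Tendsto (fun N => qPoch q (q ^ 6) (N + 1) * qPoch (q ^ 5) (q ^ 6) N /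
      qPoch (q ^ 6) (q ^ 6) (2 * N + 1)) atTop
      (𝓝 (qPochInf q (q ^ 6) * qPochInf (q ^ 5) (q ^ 6) / qPochInf (q ^ 6) (q ^ 6))) := by
    refine Tendsto.div (Tendsto.mul ?_ (qPoch_tendsto_s16 hp _)) ?_ (qPochInf_ne_s16 hp)
    · exact (qPoch_tendsto_s16 hp q).comp (tendsto_add_atTop_nat 1)
    · refine (qPoch_tendsto_s16 hp (q ^ 6)).comp (tendsto_atTop_mono (fun N => ?_) tendsto_id)
      simp only [id]; omega
  have h := tendsto_nhds_unique h1 h2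
  have hne := qPochInf_ne_s16 hp
  field_simp at h
  rw [h]
  ring

open Filter Topology in
lemma rr_main {q : ℂ} (hq : ‖q‖ < 1) (h0 : q ≠ 0) :
    ∑' n : ℕ, q ^ (n ^ 2 + 2 * n) * qPoch (-q) (q ^ 2) n / qPoch (q ^ 4) (q ^ 4) n
      = qPochInf (-q) (q ^ 2) / qPochInf (q ^ 2) (q ^ 2) *
          (qPochInf q (q ^ 6) * qPochInf (q ^ 5) (q ^ 6) * qPochInf (q ^ 6) (q ^ 6)) := by
  have hQ : ‖q ^ 2‖ < 1 := norm_pow_lt hq 1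
  have hQ4 : ‖q ^ 4‖ < 1 := norm_pow_lt hq 3
  obtain ⟨C, hC0, hC⟩ := bdd_of_tendsto (inv_tendsto hQ)
  obtain ⟨D, hD0, hD⟩ := bdd_of_tendsto ((qPoch_tendsto_s16 hQ (-q)).mul (inv_tendsto hQ4))
  have hs : Summable fun n : ℕ => ‖q ^ (n ^ 2 + 2 * n) * qPoch (-q) (q ^ 2) n /
      qPoch (q ^ 4) (q ^ 4) n‖ := by
    refine (summable_aux hq (e := fun n => n ^ 2 + 2 * n) hD (fun n => by nlinarith)).congr
      fun n => ?_
    congr 1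
    ring
  have h1 := tannery hs (w := fun N n => iv (q ^ 2) N n) (iv_bound hC0 hC) (iv_tendsto hQ)
    (iv_zero _)
  have h2 := ((qPoch_tendsto_s16 hQ (-q)).comp (tendsto_add_atTop_nat 1)).mul (theta_lim hq hQ)
  simp only [rr_star hq h0] at h1
  have h := tendsto_nhds_unique h1 h2
  rw [theta_eq hq h0] at h
  have hne := qPochInf_ne_s16 hQ
  rw [← mul_left_inj' (inv_ne_zero hne), h]
  field_simp

/-- Identity (31): for `|q| < 1`,
`Σ_{n≥0} q^{n^2+2n} (-q;q^2)_n / (q^4;q^4)_n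
  = ((-q;q^2)_∞/(q^2;q^2)_∞) (q;q^6)_∞ (q^5;q^6)_∞ (q^6;q^6)_∞`. -/
theorem rr_31 (q : ℂ) (hq : ‖q‖ < 1) :
    ∑' n : ℕ, q ^ (n ^ 2 + 2 * n) * qPoch (-q) (q ^ 2) n / qPoch (q ^ 4) (q ^ 4) n
      = qPochInf (-q) (q ^ 2) / qPochInf (q ^ 2) (q ^ 2) *
          (qPochInf q (q ^ 6) * qPochInf (q ^ 5) (q ^ 6) * qPochInf (q ^ 6) (q ^ 6)) := by
  by_cases h0 : q = 0
  · subst h0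
    rw [tsum_eq_single 0 (fun n hn => by
      rw [zero_pow (by have := Nat.pos_of_ne_zero hn; positivity), zero_mul, zero_div])]
    simp [qPoch, qPochInf]
  · exact rr_main hq h0
end
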